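/- The set 𝓢 of sequences of everywhere converging martingales having a subsequence whose associated functions converge pointwise to zero, 𝓢 := {(f_k)_{k∈ℕ} ∈ 𝓟^ℕ : there exists γ ∈ ω^ω such that for every β ∈ 2^ω, lim_{i→∞} ψ(f_{γ(i)})(β) = 0}, is Σ¹₂-complete: 𝓢 is a Σ¹₂ subset of ([0,1]^{2^{<ω}})^ℕ (i.e., 𝓢 is the projection of a coanalytic subset of ([0,1]^{2^{<ω}})^ℕ × ω^ω), and for every subset Q of 2^ω which is the projection to 2^ω of a coanalytic subset of 2^ω × ω^ω, there is a continuous map g : 2^ω → 𝓜^ℕ with Q = g⁻¹(𝓢). -/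

import Mathlib

open MeasureTheory Filter Topology
open scoped ENNReal

/-- The basic cylinder `N_s` determined by a finite binary sequence `s`:
the set of all `β ∈ 2^ω` extending `s`. -/
def cyl (s : List Bool) : Set (ℕ → Bool) :=
  {β | ∀ i : Fin s.length, β i = s.get i}

/-- The initial segment `β↾l` of `β ∈ 2^ω`, as a finite binary sequence. -/
def seg (β : ℕ → Bool) (l : ℕ) : List Bool := List.ofFn (fun i : Fin l => β i)

/-- A martingale: a `[0,1]`-valued function on finite binary sequences with
`f(s) = (f(s⌢0) + f(s⌢1))/2`. -/
def IsMartingale (f : List Bool → ℝ) : Prop :=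
  (∀ s, f s ∈ Set.Icc (0:ℝ) 1) ∧
  ∀ s, f s = (f (s ++ [false]) + f (s ++ [true])) / 2

/-- The oscillation `osc(f,β) = inf_N sup_{p,q ≥ N} |f(β↾p) − f(β↾q)|`. -/
noncomputable def osc (f : List Bool → ℝ) (β : ℕ → Bool) : ℝ :=
  ⨅ N : ℕ, ⨆ p : {n : ℕ // N ≤ n}, ⨆ q : {n : ℕ // N ≤ n},
    |f (seg β p.1) - f (seg β q.1)|

/-- The set of divergence `D(f) = {β : osc(f,β) > 0}`. -/
def divSet (f : List Bool → ℝ) : Set (ℕ → Bool) := {β | 0 < osc f β}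

/-- `M` has density 1 at `β`: `λ(M ∩ N_{β↾l}) / λ(N_{β↾l}) → 1`. -/
def densityOne (μ : Measure (ℕ → Bool)) (M : Set (ℕ → Bool)) (β : ℕ → Bool) : Prop :=
  Tendsto (fun l : ℕ => μ (M ∩ cyl (seg β l)) / μ (cyl (seg β l))) atTop (𝓝 1)

/-- A set is `Σ⁰₃` iff it is a countable union of `Gδ` sets. -/
def IsSigma03 {X : Type*} [TopologicalSpace X] (S : Set X) : Prop :=
  ∃ g : ℕ → Set X, (∀ n, IsGδ (g n)) ∧ S = ⋃ n, g n

/-- A set is coanalytic (`Π¹₁`) iff its complement is analytic. -/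
def IsCoanalytic {X : Type*} [TopologicalSpace X] (S : Set X) : Prop :=
  MeasureTheory.AnalyticSet Sᶜ

/-- The associated (partial) function of a martingale: `ψ(f)(β) = lim_l f(β↾l)`
(a junk value if the limit does not exist). -/
noncomputable def psi (f : List Bool → ℝ) (β : ℕ → Bool) : ℝ :=
  limUnder atTop (fun l => f (seg β l))

/-- The compact space `𝓜` of martingales, as a subspace of `[0,1]^{2^{<ω}}`. -/
abbrev Mart := {f : List Bool → ℝ // IsMartingale f}

/-- The set `𝓟` of everywhere converging martingales. -/
def Pconv : Set Mart := {f | ∀ β : ℕ → Bool, osc f.1 β = 0}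

/-- `𝓢`: sequences of everywhere converging martingales with a subsequence
whose associated functions converge pointwise to zero. -/
def Ssub : Set (ℕ → Mart) :=
  {F | (∀ k, F k ∈ Pconv) ∧
    ∃ γ : ℕ → ℕ, ∀ β : ℕ → Bool,
      Tendsto (fun i => psi (F (γ i)).1 β) atTop (𝓝 (0:ℝ))}

/-!
The density martingale `t ↦ λ(S ∩ N_t) / λ(N_t)` of a clopen set `S` converges everywhere to the
indicator function of `S`. So it suffices to bring every `Σ¹₂` set `Q` into the normal form
`x ∈ Q ↔ ∃ γ, ∀ β, ∀ᶠ i, (x, β) ∉ C (γ i)` with clopen sets `C k`, and to map `x` to the density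
martingales of the sections of the `C k`.

Let `Q` be the projection of a coanalytic `D ⊆ X × 2^ω`, and write `(x, δ) ∉ D` as
`∃ w, ∃ᶠ n, ((x, δ), w) ∈ R n` with `R n` clopen. Fix a sequence `s` visiting every open subset of
`2^ω` infinitely often. A real `δ₀` with `(x, δ₀) ∈ D` is coded by a `γ` along which `s` converges
to `δ₀`. A triple `β = (δ, w, B)` refutes `γ` by guessing an infinite set `B` of indices, hit
infinitely often by `γ`, along which `s` converges to `δ` and `w` witnesses `(x, δ) ∉ D`. The number
of earlier elements of `B` measures how far both have to be verified at the next element, so that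
the verification is a clopen condition. If `γ` codes `δ₀` then `δ = δ₀`, and no `w` exists. If `x`
is not in `Q`, compactness of `2^ω` turns any `γ` into a convergent subsequence of `s`, and hence
into a refutation.
-/

instance : PolishSpace (ℕ → Bool) where

section Analytic

variable {X Y : Type*} [TopologicalSpace X] [TopologicalSpace Y]

/-- A set is `Σ¹₂` iff it is the projection of a coanalytic subset of its product with the Baire
space. -/
def IsSigma12 (S : Set X) : Prop :=
  ∃ D : Set (X × (ℕ → ℕ)), IsCoanalytic D ∧ S = Prod.fst '' D

theorem analyticSet_union {A B : Set X} (hA : AnalyticSet A) (hB : AnalyticSet B) :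
    AnalyticSet (A ∪ B) :=
  Set.union_eq_iUnion ▸ AnalyticSet.iUnion (Bool.forall_bool.2 ⟨hB, hA⟩)

theorem isCoanalytic_of_measurableSet [PolishSpace X] [MeasurableSpace X] [BorelSpace X]
    {S : Set X} (hS : MeasurableSet S) : IsCoanalytic S :=
  hS.compl.analyticSet

theorem IsCoanalytic.setOf_forall {D : Set (X × Y)} (hD : IsCoanalytic D) :
    IsCoanalytic {x | ∀ y, (x, y) ∈ D} := by
  have hcompl : {x | ∀ y, (x, y) ∈ D}ᶜ = Prod.fst '' Dᶜ := by
    ext x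
    simp
  rw [IsCoanalytic, hcompl]
  exact hD.image_of_continuous continuous_fst

theorem IsCoanalytic.image [PolishSpace X] [PolishSpace Y] {D : Set X} (hD : IsCoanalytic D)
    {j : X → Y} (hj : Continuous j) (hinj : Function.Injective j) : IsCoanalytic (j '' D) := by
  borelize Y
  rw [IsCoanalytic, hinj.compl_image_eq]
  exact analyticSet_union (hD.image_of_continuous hj)
    (measurableSet_range_of_continuous_injective hj hinj).compl.analyticSet

end Analytic

section ZeroDimensional

instance {X Y : Type*} [TopologicalSpace X] [TopologicalSpace Y] [TotallySeparatedSpace X]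
    [TotallySeparatedSpace Y] : TotallySeparatedSpace (X × Y) := by
  refine totallySeparatedSpace_iff_exists_isClopen.2 fun p q hpq => ?_
  rcases not_and_or.1 (mt Prod.ext_iff.2 hpq) with hne | hne
  · obtain ⟨U, hU, hp, hq⟩ := exists_isClopen_of_totally_separated hne
    exact ⟨Prod.fst ⁻¹' U, hU.preimage continuous_fst, hp, hq⟩
  · obtain ⟨U, hU, hp, hq⟩ := exists_isClopen_of_totally_separated hne
    exact ⟨Prod.snd ⁻¹' U, hU.preimage continuous_snd, hp, hq⟩

instance {ι : Type*} {X : ι → Type*} [∀ i, TopologicalSpace (X i)]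
    [∀ i, TotallySeparatedSpace (X i)] : TotallySeparatedSpace (∀ i, X i) := by
  refine totallySeparatedSpace_iff_exists_isClopen.2 fun x y hxy => ?_
  obtain ⟨i, hi⟩ := Function.ne_iff.1 hxy
  obtain ⟨U, hU, hx, hy⟩ := exists_isClopen_of_totally_separated hi
  exact ⟨(fun z => z i) ⁻¹' U, hU.preimage (continuous_apply i), hx, hy⟩

theorem exists_continuous_injective_nat_bool (X : Type*) [TopologicalSpace X]
    [SecondCountableTopology X] [TotallySeparatedSpace X] :
    ∃ e : X → ℕ → Bool, Continuous e ∧ Function.Injective e := by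
  have hsep : ∀ p : {p : X × X // p.1 ≠ p.2}, ∃ U : Set X, IsClopen U ∧ p.1.1 ∈ U ∧ p.1.2 ∈ Uᶜ :=
    fun p => exists_isClopen_of_totally_separated p.2
  choose U hU hleft hright using hsep
  obtain ⟨T, hT, hcover⟩ := TopologicalSpace.isOpen_iUnion_countable
    (fun p => U p ×ˢ (U p)ᶜ) fun p => (hU p).isOpen.prod (hU p).compl.isOpen
  obtain ⟨V, hV⟩ := ((hT.image U).insert ∅).exists_eq_range (Set.insert_nonempty _ _)
  have hclopen (n : ℕ) : IsClopen (V n) := by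
    have hmem : V n ∈ insert ∅ (U '' T) := hV ▸ Set.mem_range_self n
    rcases hmem with hempty | ⟨p, -, hp⟩
    · exact hempty ▸ isClopen_empty
    · exact hp ▸ hU p
  refine ⟨fun x n => (V n).boolIndicator x, continuous_pi fun n =>
    (continuous_boolIndicator_iff_isClopen _).2 (hclopen n), fun x y hxy => ?_⟩
  by_contra hne
  have hmem : (x, y) ∈ ⋃ p ∈ T, U p ×ˢ (U p)ᶜ :=
    hcover ▸ Set.mem_iUnion.2 ⟨⟨(x, y), hne⟩, hleft _, hright _⟩
  obtain ⟨p, hpT, hx, hy⟩ := Set.mem_iUnion₂.1 hmem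
  obtain ⟨n, hn⟩ : U p ∈ Set.range V := hV ▸ Or.inr ⟨p, hpT, rfl⟩
  rw [← hn, Set.mem_iff_boolIndicator] at hx
  rw [← hn, Set.mem_compl_iff, Set.mem_iff_boolIndicator] at hy
  have heq : (V n).boolIndicator x = (V n).boolIndicator y := congrFun hxy n
  exact hy (heq ▸ hx)

theorem isClopen_setOf_mem_apply {X ι : Type*} [TopologicalSpace X] [TopologicalSpace ι]
    [DiscreteTopology ι] {c : X → ι} (hc : Continuous c) {T : ι → Set X}
    (hT : ∀ i, IsClopen (T i)) : IsClopen {x | x ∈ T (c x)} := by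
  have hopen {T : ι → Set X} (hT : ∀ i, IsOpen (T i)) : IsOpen {x | x ∈ T (c x)} := by
    have hunion : {x | x ∈ T (c x)} = ⋃ i, c ⁻¹' {i} ∩ T i := by
      ext x
      simp
    rw [hunion]
    exact isOpen_iUnion fun i => ((isOpen_discrete {i}).preimage hc).inter (hT i)
  exact ⟨⟨hopen fun i => (hT i).compl.isOpen⟩, hopen fun i => (hT i).isOpen⟩

theorem isLocallyConstant_section {X K : Type*} [TopologicalSpace X] [TopologicalSpace K]
    [CompactSpace K] {C : Set (X × K)} (hC : IsClopen C) :
    IsLocallyConstant fun x => Prod.mk x ⁻¹' C := by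
  refine (IsLocallyConstant.iff_eventually_eq _).2 fun x₀ => ?_
  have hnear (y : K) : ∀ᶠ p : X × K in 𝓝 (x₀, y), ((p.1, p.2) ∈ C ↔ (x₀, p.2) ∈ C) := by
    have hslice : IsClopen ((fun p : X × K => (x₀, p.2)) ⁻¹' C) := hC.preimage (by fun_prop)
    by_cases hy : (x₀, y) ∈ C
    · filter_upwards [hC.isOpen.mem_nhds hy, hslice.isOpen.mem_nhds hy] with p hp hp₀
      exact iff_of_true hp hp₀
    · filter_upwards [hC.compl.isOpen.mem_nhds hy, hslice.compl.isOpen.mem_nhds hy] with p hp hp₀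
      exact iff_of_false hp hp₀
  filter_upwards [isCompact_univ.eventually_forall_of_forall_eventually
    (P := fun x y => (x, y) ∈ C ↔ (x₀, y) ∈ C) fun y _ => hnear y] with x hx
  ext y
  exact hx y (Set.mem_univ y)

theorem eventually_cylinder_subset {β : ℕ → Bool} {U : Set (ℕ → Bool)} (hU : U ∈ 𝓝 β) :
    ∀ᶠ l in atTop, PiNat.cylinder β l ⊆ U := by
  obtain ⟨_, ⟨x, n, rfl⟩, hβ, hsub⟩ :=
    (PiNat.isTopologicalBasis_cylinders fun _ : ℕ => Bool).mem_nhds_iff.1 hU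
  rw [← PiNat.mem_cylinder_iff_eq.1 hβ] at hsub
  filter_upwards [eventually_ge_atTop n] with l hl
  exact (PiNat.cylinder_anti β hl).trans hsub

theorem isClopen_cylinder (β : ℕ → Bool) (n : ℕ) : IsClopen (PiNat.cylinder β n) := by
  refine ⟨?_, PiNat.isOpen_cylinder _ β n⟩
  rw [PiNat.cylinder_eq_pi]
  exact isClosed_set_pi fun i _ => isClosed_discrete _

end ZeroDimensional

section UpperBound

theorem continuous_eval_prod_of_discrete {ι Y : Type*} [TopologicalSpace ι] [DiscreteTopology ι]
    [TopologicalSpace Y] : Continuous fun p : ι × (ι → Y) => p.2 p.1 :=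
  continuous_prod_of_discrete_left.2 continuous_apply

theorem continuous_eval_seg (l : ℕ) :
    Continuous fun p : (List Bool → ℝ) × (ℕ → Bool) => p.1 (seg p.2 l) :=
  (continuous_eval_prod_of_discrete (ι := Fin l → Bool)).comp
    (f := fun p : (List Bool → ℝ) × (ℕ → Bool) =>
      (fun i : Fin l => p.2 i, fun t : Fin l → Bool => p.1 (List.ofFn t))) (by fun_prop)

theorem measurable_osc : Measurable fun p : (List Bool → ℝ) × (ℕ → Bool) => osc p.1 p.2 :=
  Measurable.iInf fun _ => Measurable.iSup fun p => Measurable.iSup fun q =>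
    ((continuous_eval_seg p).sub (continuous_eval_seg q)).abs.measurable

theorem measurable_psi : Measurable fun p : (List Bool → ℝ) × (ℕ → Bool) => psi p.1 p.2 :=
  (StronglyMeasurable.limUnder fun l => (continuous_eval_seg l).stronglyMeasurable).measurable

theorem isClosed_setOf_isMartingale : IsClosed {f : List Bool → ℝ | IsMartingale f} := by
  simp only [IsMartingale, Set.ofPred_and, Set.ofPred_forall]
  exact (isClosed_iInter fun s => isClosed_Icc.preimage (continuous_apply s)).inter
    (isClosed_iInter fun s => isClosed_eq (by fun_prop) (by fun_prop))

instance : PolishSpace Mart := isClosed_setOf_isMartingale.polishSpace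

theorem isCoanalytic_setOf_tendsto_psi :
    IsCoanalytic {p : (ℕ → Mart) × (ℕ → ℕ) | ∀ β, (∀ k, osc (p.1 k).1 β = 0) ∧
      Tendsto (fun i => psi (p.1 (p.2 i)).1 β) atTop (𝓝 (0 : ℝ))} := by
  have hosc (k : ℕ) : Measurable fun q : ((ℕ → Mart) × (ℕ → ℕ)) × (ℕ → Bool) =>
      osc (q.1.1 k).1 q.2 :=
    measurable_osc.comp (f := fun q : ((ℕ → Mart) × (ℕ → ℕ)) × (ℕ → Bool) =>
      ((q.1.1 k).1, q.2)) (by fun_prop)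
  have hpsi (i : ℕ) : Measurable fun q : ((ℕ → Mart) × (ℕ → ℕ)) × (ℕ → Bool) =>
      psi (q.1.1 (q.1.2 i)).1 q.2 := by
    have heval : Continuous fun q : ((ℕ → Mart) × (ℕ → ℕ)) × (ℕ → Bool) => q.1.1 (q.1.2 i) :=
      continuous_eval_prod_of_discrete.comp
        (f := fun q : ((ℕ → Mart) × (ℕ → ℕ)) × (ℕ → Bool) => (q.1.2 i, q.1.1)) (by fun_prop)
    exact measurable_psi.comp
      ((continuous_subtype_val.comp heval).prodMk continuous_snd).measurable
  have hmeas : MeasurableSet {q : ((ℕ → Mart) × (ℕ → ℕ)) × (ℕ → Bool) |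
      (∀ k, osc (q.1.1 k).1 q.2 = 0) ∧
        Tendsto (fun i => psi (q.1.1 (q.1.2 i)).1 q.2) atTop (𝓝 (0 : ℝ))} := by
    rw [Set.ofPred_and, Set.ofPred_forall]
    exact (MeasurableSet.iInter fun k => hosc k (measurableSet_singleton 0)).inter
      (measurableSet_tendsto (𝓝 (0 : ℝ)) hpsi)
  exact (isCoanalytic_of_measurableSet hmeas).setOf_forall

theorem isSigma12_Ssub : IsSigma12 Ssub := by
  refine ⟨_, isCoanalytic_setOf_tendsto_psi, ?_⟩
  ext F
  simp only [Ssub, Pconv, Set.mem_ofPred_eq, Set.mem_image, Prod.exists, exists_and_right,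
    exists_eq_right, forall_and, exists_and_left]
  rw [forall_comm]

end UpperBound

theorem IsSigma12.exists_isCoanalytic_nat_bool {X : Type*} [TopologicalSpace X] [PolishSpace X]
    {Q : Set X} (hQ : IsSigma12 Q) :
    ∃ D : Set (X × (ℕ → Bool)), IsCoanalytic D ∧ Q = Prod.fst '' D := by
  obtain ⟨D, hD, rfl⟩ := hQ
  obtain ⟨e, he, hinj⟩ := exists_continuous_injective_nat_bool (ℕ → ℕ)
  exact ⟨Prod.map id e '' D,
    hD.image (continuous_id.prodMap he) (Function.injective_id.prodMap hinj),
    (Set.image_image Prod.fst (Prod.map id e) D).symm⟩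

section Count

theorem continuous_count (k : ℕ) :
    Continuous fun B : ℕ → Bool => Nat.count (fun n => B n = true) k := by
  simp only [Nat.count_eq_card_filter_range, Finset.card_filter]
  refine continuous_finsetSum _ fun n _ => ?_
  exact (continuous_of_discreteTopology (f := fun b : Bool => if b = true then 1 else 0)).comp
    (continuous_apply n)

theorem frequently_boolIndicator_range {σ : ℕ → ℕ} (hσ : StrictMono σ) :
    ∃ᶠ n in atTop, (Set.range σ).boolIndicator n = true := by
  simp only [← Set.mem_iff_boolIndicator]
  exact Nat.frequently_atTop_iff_infinite.2 (Set.infinite_range_of_injective hσ.injective)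

theorem nth_boolIndicator_range {σ : ℕ → ℕ} (hσ : StrictMono σ) (j : ℕ) :
    Nat.nth (fun n => (Set.range σ).boolIndicator n = true) j = σ j := by
  simp only [← Set.mem_iff_boolIndicator]
  have h := Nat.nth_comp_of_strictMono (p := (· ∈ Set.range σ)) (n := j) hσ (fun _ h => h)
    fun hfin => absurd hfin (Set.infinite_range_of_injective hσ.injective)
  simpa using h.symm

theorem count_boolIndicator_range {σ : ℕ → ℕ} (hσ : StrictMono σ) (j : ℕ) :
    Nat.count (fun n => (Set.range σ).boolIndicator n = true) (σ j) = j := by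
  rw [← nth_boolIndicator_range hσ j, Nat.count_nth_of_infinite]
  exact Nat.frequently_atTop_iff_infinite.1 (frequently_boolIndicator_range hσ)

theorem tendsto_count_atTop {p : ℕ → Prop} [DecidablePred p] (hp : ∃ᶠ n in atTop, p n) :
    Tendsto (Nat.count p) atTop atTop :=
  tendsto_atTop_atTop_of_monotone (Nat.count_monotone p) fun b =>
    ⟨Nat.nth p b, (Nat.count_nth_of_infinite (Nat.frequently_atTop_iff_infinite.1 hp) b).ge⟩

end Count

/-- The sequence of naturals coded by a binary sequence with infinitely many ones: every natural
is the second unpairing component of arbitrarily large positions, so that any sequence can be read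
off the increasing enumeration of the ones. -/
noncomputable def decodeBaire (E : ℕ → Bool) (i : ℕ) : ℕ :=
  (Nat.nth (fun n => E n = true) i).unpair.2

theorem continuousAt_decodeBaire {E : ℕ → Bool} (hE : ∃ᶠ n in atTop, E n = true) :
    ContinuousAt decodeBaire E := by
  refine continuousAt_pi.2 fun i => ?_
  set N := Nat.nth (fun n => E n = true) i with hN
  have hinf := Nat.frequently_atTop_iff_infinite.1 hE
  have hbit : ∀ᶠ E' in 𝓝 E, E' N = E N :=
    ((IsLocallyConstant.iff_continuous _).2 (continuous_apply N)).eventually_eq E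
  have hcount : ∀ᶠ E' in 𝓝 E,
      Nat.count (fun n => E' n = true) N = Nat.count (fun n => E n = true) N :=
    ((IsLocallyConstant.iff_continuous _).2 (continuous_count N)).eventually_eq E
  refine tendsto_const_nhds.congr' ?_
  filter_upwards [hbit, hcount] with E' hbit hcount
  have hone : E' N = true := hbit.trans (Nat.nth_mem_of_infinite hinf i)
  have hnth := Nat.nth_count (p := fun n => E' n = true) hone
  rw [hcount, Nat.count_nth_of_infinite hinf] at hnth
  rw [decodeBaire, decodeBaire, hnth, ← hN]

theorem exists_decodeBaire_eq (ε : ℕ → ℕ) :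
    ∃ E, (∃ᶠ n in atTop, E n = true) ∧ decodeBaire E = ε := by
  have hfreq (i : ℕ) : ∃ᶠ k in atTop, (Nat.unpair k).2 = ε i :=
    frequently_atTop.2 fun a => ⟨Nat.pair a (ε i), Nat.left_le_pair _ _, by simp⟩
  obtain ⟨σ, hσ, hσε⟩ := extraction_forall_of_frequently hfreq
  exact ⟨(Set.range σ).boolIndicator, frequently_boolIndicator_range hσ,
    funext fun i => by rw [decodeBaire, nth_boolIndicator_range hσ, hσε]⟩

/-- The pairs `(z, E)` with `E n = true` which agree with a point of the graph of `φ` on the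
coordinates up to `n`. -/
def graphApprox (φ : (ℕ → Bool) → ℕ → Bool) (n : ℕ) : Set ((ℕ → Bool) × (ℕ → Bool)) :=
  {p | p.2 n = true ∧ ∃ E, (∀ i ≤ n, φ E i = p.1 i) ∧ ∀ i ≤ n, E i = p.2 i}

theorem isClopen_graphApprox (φ : (ℕ → Bool) → ℕ → Bool) (n : ℕ) :
    IsClopen (graphApprox φ n) := by
  let restrict (z : ℕ → Bool) (i : Finset.Iic n) : Bool := z i
  have hrestrict : Continuous restrict := by fun_prop
  have happrox : graphApprox φ n = {p | p.2 n = true} ∩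
      Prod.map restrict restrict ⁻¹' Set.range fun E => (restrict (φ E), restrict E) := by
    ext p
    simp [graphApprox, restrict, funext_iff, Prod.ext_iff]
  rw [happrox]
  exact ((isClopen_discrete {true}).preimage ((continuous_apply n).comp continuous_snd)).inter
    ((isClopen_discrete _).preimage (hrestrict.prodMap hrestrict))

theorem frequently_mem_graphApprox_iff {φ : (ℕ → Bool) → ℕ → Bool}
    (hφ : ∀ E, (∃ᶠ n in atTop, E n = true) → ContinuousAt φ E) (z E : ℕ → Bool) :
    (∃ᶠ n in atTop, (z, E) ∈ graphApprox φ n) ↔ (∃ᶠ n in atTop, E n = true) ∧ φ E = z := by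
  refine ⟨fun h => ?_, fun ⟨hE, hz⟩ => hE.mono fun n hn => ⟨hn, E, fun i _ => congrFun hz i,
    fun i _ => rfl⟩⟩
  have hE : ∃ᶠ n in atTop, E n = true := h.mono fun n hn => hn.1
  refine ⟨hE, funext fun j => ?_⟩
  have hnear : ∀ᶠ E' in 𝓝 E, φ E' j = φ E j :=
    ((continuous_apply j).continuousAt.comp (hφ E hE)).eventually_mem
      ((isOpen_discrete {φ E j}).mem_nhds rfl)
  obtain ⟨n, ⟨-, E', hz, hE'⟩, hsub, hjn⟩ :=
    (h.and_eventually ((eventually_cylinder_subset hnear).and (eventually_ge_atTop j))).exists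
  have hmem : E' ∈ PiNat.cylinder E n := fun i hi => hE' i hi.le
  exact (hsub hmem).symm.trans (hz j hjn)

theorem exists_isClopen_frequently_of_analyticSet {Y : Type*} [TopologicalSpace Y]
    [SecondCountableTopology Y] [TotallySeparatedSpace Y] {A : Set Y} (hA : AnalyticSet A) :
    ∃ R : ℕ → Set (Y × (ℕ → Bool)), (∀ n, IsClopen (R n)) ∧
      ∀ y, y ∈ A ↔ ∃ E, ∃ᶠ n in atTop, (y, E) ∈ R n := by
  rw [AnalyticSet] at hA
  rcases hA with rfl | ⟨f, hf, rfl⟩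
  · exact ⟨fun _ => ∅, fun _ => isClopen_empty, by simp⟩
  obtain ⟨e, he, hinj⟩ := exists_continuous_injective_nat_bool Y
  let φ (E : ℕ → Bool) : ℕ → Bool := e (f (decodeBaire E))
  have hφ (E : ℕ → Bool) (hE : ∃ᶠ n in atTop, E n = true) : ContinuousAt φ E :=
    (he.comp hf).continuousAt.comp (continuousAt_decodeBaire hE)
  refine ⟨fun n => Prod.map e id ⁻¹' graphApprox φ n,
    fun n => (isClopen_graphApprox φ n).preimage (he.prodMap continuous_id), fun y => ?_⟩
  have hiff (E : ℕ → Bool) : (∃ᶠ n in atTop, (y, E) ∈ Prod.map e id ⁻¹' graphApprox φ n) ↔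
      (∃ᶠ n in atTop, E n = true) ∧ f (decodeBaire E) = y :=
    (frequently_mem_graphApprox_iff hφ (e y) E).trans (and_congr_right' hinj.eq_iff)
  simp only [hiff]
  refine ⟨?_, fun ⟨E, _, hE⟩ => ⟨decodeBaire E, hE⟩⟩
  rintro ⟨ε, rfl⟩
  obtain ⟨E, hE, rfl⟩ := exists_decodeBaire_eq ε
  exact ⟨E, hE, rfl⟩

theorem exists_seq_frequently_mem (X : Type*) [TopologicalSpace X]
    [TopologicalSpace.SeparableSpace X] [Nonempty X] :
    ∃ s : ℕ → X, ∀ U : Set X, IsOpen U → U.Nonempty → ∃ᶠ k in atTop, s k ∈ U := by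
  refine ⟨fun k => TopologicalSpace.denseSeq X k.unpair.2, fun U hU hne => ?_⟩
  obtain ⟨m, hm⟩ := (TopologicalSpace.denseRange_denseSeq X).exists_mem_open hU hne
  exact frequently_atTop.2 fun a => ⟨Nat.pair a m, Nat.left_le_pair _ _, by simpa using hm⟩

section Trap

variable {X W : Type*} {s : ℕ → ℕ → Bool} {R : ℕ → Set ((X × (ℕ → Bool)) × W)}

/-- The quadruples `(x, δ, w, B)` trapping the index `k`: `k` belongs to the set with indicator `B`
and, unless it is its least element, the number `j` of elements below `k` is such that `s k` agrees
with `δ` below `j` and `((x, δ), w) ∈ R n` for some `n` between `j` and `k`. Exempting the least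
element lets a singleton trap every `γ` that takes some value infinitely often. -/
def trap (s : ℕ → ℕ → Bool) (R : ℕ → Set ((X × (ℕ → Bool)) × W)) (k : ℕ) :
    Set (X × (ℕ → Bool) × W × (ℕ → Bool)) :=
  {(x, δ, w, B) | B k = true ∧ (Nat.count (fun n => B n = true) k = 0 ∨
    s k ∈ PiNat.cylinder δ (Nat.count (fun n => B n = true) k) ∧
      ∃ n ∈ Finset.Icc (Nat.count (fun n => B n = true) k) k, ((x, δ), w) ∈ R n)}

theorem isClopen_trap [TopologicalSpace X] [TopologicalSpace W] (hR : ∀ n, IsClopen (R n)) (k : ℕ) :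
    IsClopen (trap s R k) := by
  have hguess (j : ℕ) : IsClopen {p : X × (ℕ → Bool) × W × (ℕ → Bool) | j = 0 ∨
      s k ∈ PiNat.cylinder p.2.1 j ∧ ∃ n ∈ Finset.Icc j k, ((p.1, p.2.1), p.2.2.1) ∈ R n} := by
    have hcyl : IsClopen {p : X × (ℕ → Bool) × W × (ℕ → Bool) | s k ∈ PiNat.cylinder p.2.1 j} := by
      simp only [PiNat.mem_cylinder_comm _ (s k)]
      exact (isClopen_cylinder (s k) j).preimage (by fun_prop)
    have hrel : IsClopen {p : X × (ℕ → Bool) × W × (ℕ → Bool) |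
        ∃ n ∈ Finset.Icc j k, ((p.1, p.2.1), p.2.2.1) ∈ R n} := by
      simp only [← exists_prop, Set.ofPred_exists]
      exact isClopen_biUnion_finset fun n _ => (hR n).preimage (by fun_prop)
    exact IsClopen.union ⟨isClosed_const, isOpen_const⟩ (hcyl.inter hrel)
  have hmem : IsClopen {p : X × (ℕ → Bool) × W × (ℕ → Bool) | p.2.2.2 k = true} :=
    (isClopen_discrete {true}).preimage (f := fun p : X × (ℕ → Bool) × W × (ℕ → Bool) => p.2.2.2 k)
      (by fun_prop)
  exact hmem.inter (isClopen_setOf_mem_apply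
    ((continuous_count k).comp (by fun_prop : Continuous fun p : X × (ℕ → Bool) × W × (ℕ → Bool) =>
      p.2.2.2)) hguess)

theorem eventually_notMem_trap {γ : ℕ → ℕ} (hγ : StrictMono γ) {x : X} {δ₀ : ℕ → Bool}
    (hs : ∀ i, s (γ i) ∈ PiNat.cylinder δ₀ i) (hx : ∀ w, ∀ᶠ n in atTop, ((x, δ₀), w) ∉ R n)
    (δ : ℕ → Bool) (w : W) (B : ℕ → Bool) : ∀ᶠ i in atTop, (x, δ, w, B) ∉ trap s R (γ i) := by
  by_contra hcon
  have hfreq : ∃ᶠ i in atTop, (x, δ, w, B) ∈ trap s R (γ i) :=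
    (not_eventually.1 hcon).mono fun i hi => not_not.1 hi
  have hcount : Tendsto (fun i => Nat.count (fun n => B n = true) (γ i)) atTop atTop :=
    (tendsto_count_atTop (hγ.tendsto_atTop.frequently (hfreq.mono fun i hi => hi.1))).comp
      hγ.tendsto_atTop
  have htrapped (N : ℕ) : ∃ i ≥ N, s (γ i) ∈ PiNat.cylinder δ N ∧ ∃ n ≥ N, ((x, δ), w) ∈ R n := by
    obtain ⟨i, ⟨-, htrap⟩, hi, hlt⟩ := (hfreq.and_eventually
      ((eventually_ge_atTop N).and (hcount.eventually_gt_atTop N))).exists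
    obtain ⟨hcyl, n, hn, hRn⟩ := htrap.resolve_left (by omega)
    exact ⟨i, hi, PiNat.cylinder_anti δ hlt.le hcyl, n, hlt.le.trans (Finset.mem_Icc.1 hn).1, hRn⟩
  have hδ : δ = δ₀ := by
    funext j
    obtain ⟨i, hi, hcyl, -⟩ := htrapped (j + 1)
    exact (hcyl j (by omega)).symm.trans (hs i j (by omega))
  subst hδ
  obtain ⟨N, hN⟩ := eventually_atTop.1 (hx w)
  obtain ⟨-, -, -, n, hn, hRn⟩ := htrapped N
  exact hN n hn hRn

theorem mem_trap_boolIndicator_singleton (x : X) (δ : ℕ → Bool) (w : W) (k : ℕ) :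
    (x, δ, w, ({k} : Set ℕ).boolIndicator) ∈ trap s R k := by
  refine ⟨(Set.mem_iff_boolIndicator _ _).1 rfl, Or.inl ?_⟩
  simp only [Nat.count_iff_forall_not, ← Set.mem_iff_boolIndicator]
  exact fun m hm => hm.ne

theorem mem_trap_boolIndicator_range {σ : ℕ → ℕ} (hσ : StrictMono σ) {x : X} {δ : ℕ → Bool} {w : W}
    {j : ℕ} (hs : s (σ j) ∈ PiNat.cylinder δ j)
    (hR : ∃ n ∈ Finset.Icc j (σ j), ((x, δ), w) ∈ R n) :
    (x, δ, w, (Set.range σ).boolIndicator) ∈ trap s R (σ j) := by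
  refine ⟨(Set.mem_iff_boolIndicator _ _).1 ⟨j, rfl⟩, Or.inr ?_⟩
  rw [count_boolIndicator_range hσ]
  exact ⟨hs, hR⟩

theorem exists_frequently_mem_trap_of_strictMono {γ : ℕ → ℕ} (hγ : StrictMono γ) {x : X}
    (hx : ∀ δ, ∃ w, ∃ᶠ n in atTop, ((x, δ), w) ∈ R n) :
    ∃ δ w B, ∃ᶠ i in atTop, (x, δ, w, B) ∈ trap s R (γ i) := by
  obtain ⟨δ, φ, hφ, hδ⟩ := CompactSpace.tendsto_subseq (s ∘ γ)
  obtain ⟨w, hw⟩ := hx δ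
  have hgood (j : ℕ) : ∀ᶠ m in atTop, s (γ (φ m)) ∈ PiNat.cylinder δ j ∧
      ∃ n ∈ Finset.Icc j (γ (φ m)), ((x, δ), w) ∈ R n := by
    obtain ⟨n, hn, hRn⟩ := frequently_atTop.1 hw j
    filter_upwards [hδ ((PiNat.isOpen_cylinder _ δ j).mem_nhds (PiNat.self_mem_cylinder δ j)),
      (hγ.comp hφ).tendsto_atTop.eventually_ge_atTop n] with m hcyl hm
    exact ⟨hcyl, n, Finset.mem_Icc.2 ⟨hn, hm⟩, hRn⟩
  obtain ⟨ι, hι, hgoodι⟩ := extraction_forall_of_eventually hgood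
  refine ⟨δ, w, (Set.range (γ ∘ φ ∘ ι)).boolIndicator, (hφ.comp hι).tendsto_atTop.frequently
    (Frequently.of_forall fun j => ?_)⟩
  exact mem_trap_boolIndicator_range (hγ.comp (hφ.comp hι)) (hgoodι j).1 (hgoodι j).2

theorem exists_frequently_mem_trap [Nonempty W] (γ : ℕ → ℕ) {x : X}
    (hx : ∀ δ, ∃ w, ∃ᶠ n in atTop, ((x, δ), w) ∈ R n) :
    ∃ δ w B, ∃ᶠ i in atTop, (x, δ, w, B) ∈ trap s R (γ i) := by
  by_cases hconst : ∃ k, ∃ᶠ i in atTop, γ i = k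
  · obtain ⟨k, hk⟩ := hconst
    refine ⟨fun _ => false, Classical.arbitrary W, ({k} : Set ℕ).boolIndicator, hk.mono ?_⟩
    rintro i rfl
    exact mem_trap_boolIndicator_singleton x _ _ _
  · have hγ : Tendsto γ atTop atTop := by
      rw [← Nat.cofinite_eq_atTop]
      refine le_cofinite_iff_eventually_ne.2 fun k => ?_
      rw [Nat.cofinite_eq_atTop]
      exact not_frequently.1 fun hk => hconst ⟨k, hk⟩
    obtain ⟨φ, hφ, hγφ⟩ := strictMono_subseq_of_tendsto_atTop hγ
    obtain ⟨δ, w, B, hfreq⟩ := exists_frequently_mem_trap_of_strictMono hγφ hx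
    exact ⟨δ, w, B, hφ.tendsto_atTop.frequently hfreq⟩

theorem exists_forall_eventually_notMem_trap_iff [Nonempty W]
    (hs : ∀ U : Set (ℕ → Bool), IsOpen U → U.Nonempty → ∃ᶠ k in atTop, s k ∈ U) (x : X) :
    (∃ γ : ℕ → ℕ, ∀ δ w B, ∀ᶠ i in atTop, (x, δ, w, B) ∉ trap s R (γ i)) ↔
      ∃ δ, ∀ w, ∀ᶠ n in atTop, ((x, δ), w) ∉ R n := by
  constructor
  · rintro ⟨γ, hγ⟩
    by_contra! hcon
    obtain ⟨δ, w, B, hfreq⟩ := exists_frequently_mem_trap (s := s) γ hcon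
    exact hfreq (hγ δ w B)
  · rintro ⟨δ, hδ⟩
    obtain ⟨γ, hγ, hsγ⟩ := extraction_forall_of_frequently fun i =>
      hs _ (PiNat.isOpen_cylinder _ δ i) ⟨δ, PiNat.self_mem_cylinder δ i⟩
    exact ⟨γ, eventually_notMem_trap hγ hsγ hδ⟩

end Trap

theorem IsSigma12.exists_isClopen_forall_eventually_notMem {X : Type*} [TopologicalSpace X]
    [PolishSpace X] [TotallySeparatedSpace X] {Q : Set X} (hQ : IsSigma12 Q) :
    ∃ C : ℕ → Set (X × (ℕ → Bool)), (∀ k, IsClopen (C k)) ∧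
      ∀ x, x ∈ Q ↔ ∃ γ : ℕ → ℕ, ∀ β, ∀ᶠ i in atTop, (x, β) ∉ C (γ i) := by
  obtain ⟨D, hD, rfl⟩ := hQ.exists_isCoanalytic_nat_bool
  obtain ⟨R, hR, hDR⟩ := exists_isClopen_frequently_of_analyticSet hD
  obtain ⟨s, hs⟩ := exists_seq_frequently_mem (ℕ → Bool)
  let := TopologicalSpace.metrizableSpaceMetric ((ℕ → Bool) × (ℕ → Bool) × (ℕ → Bool))
  obtain ⟨u, hu, husurj⟩ := exists_nat_bool_continuous_surjective_of_compact
    ((ℕ → Bool) × (ℕ → Bool) × (ℕ → Bool))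
  refine ⟨fun k => Prod.map id u ⁻¹' trap s R k,
    fun k => (isClopen_trap hR k).preimage (continuous_id.prodMap hu), fun x => ?_⟩
  have hmem (δ : ℕ → Bool) : (x, δ) ∈ D ↔ ∀ w, ∀ᶠ n in atTop, ((x, δ), w) ∉ R n := by
    simpa only [not_exists, not_frequently, Set.mem_compl_iff, not_not] using
      not_congr (hDR (x, δ))
  calc
    x ∈ Prod.fst '' D ↔ ∃ δ, ∀ w, ∀ᶠ n in atTop, ((x, δ), w) ∉ R n := by
      simp only [Set.mem_image, Prod.exists, exists_and_right, exists_eq_right, hmem]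
    _ ↔ ∃ γ : ℕ → ℕ, ∀ δ w B, ∀ᶠ i in atTop, (x, δ, w, B) ∉ trap s R (γ i) :=
      (exists_forall_eventually_notMem_trap_iff hs x).symm
    _ ↔ ∃ γ : ℕ → ℕ, ∀ β, ∀ᶠ i in atTop, (x, u β) ∉ trap s R (γ i) :=
      exists_congr fun γ => ⟨fun h β => h _ _ _, fun h δ w B => by
        obtain ⟨β, hβ⟩ := husurj (δ, w, B)
        exact hβ ▸ h β⟩

section Martingale

theorem cyl_seg (β : ℕ → Bool) (l : ℕ) : cyl (seg β l) = PiNat.cylinder β l := by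
  ext β'
  simp [cyl, seg, PiNat.cylinder, Fin.forall_iff]

theorem cyl_eq_pi (t : List Bool) :
    cyl t = Set.pi (Finset.range t.length) fun i => {t.getD i false} := by
  ext β
  simp +contextual [cyl, Set.mem_pi, Fin.forall_iff]

theorem cyl_append_singleton (t : List Bool) (b : Bool) :
    cyl (t ++ [b]) = cyl t ∩ {β | β t.length = b} := by
  ext β
  simp only [cyl, Set.mem_ofPred_eq, Set.mem_inter_iff, Fin.forall_iff, List.get_eq_getElem]
  grind

/-- The fair coin-tossing measure on the Cantor space. -/
noncomputable def coinMeasure : Measure (ℕ → Bool) :=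
  Measure.infinitePi fun _ => (PMF.uniformOfFintype Bool).toMeasure

instance : IsProbabilityMeasure coinMeasure :=
  inferInstanceAs (IsProbabilityMeasure (Measure.infinitePi _))

theorem coinMeasure_real_cyl (t : List Bool) : coinMeasure.real (cyl t) = 2⁻¹ ^ t.length := by
  have hbit (b : Bool) : (PMF.uniformOfFintype Bool).toMeasure {b} = 2⁻¹ := by
    simp
  rw [cyl_eq_pi, measureReal_def, coinMeasure,
    Measure.infinitePi_pi _ fun i _ => measurableSet_singleton _]
  simp [hbit]

theorem measureReal_inter_cyl (μ : Measure (ℕ → Bool)) [IsFiniteMeasure μ] (S : Set (ℕ → Bool))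
    (t : List Bool) :
    μ.real (S ∩ cyl t) = μ.real (S ∩ cyl (t ++ [false])) + μ.real (S ∩ cyl (t ++ [true])) := by
  have hbit : MeasurableSet {β : ℕ → Bool | β t.length = true} :=
    measurableSet_eq_fun (measurable_pi_apply _) measurable_const
  have hfalse : {β : ℕ → Bool | β t.length = false} = {β | β t.length = true}ᶜ := by
    ext β
    simp
  rw [cyl_append_singleton, cyl_append_singleton, hfalse, ← Set.inter_assoc, ← Set.inter_assoc,
    ← Set.sdiff_eq, measureReal_sdiff_add_inter hbit]

theorem isMartingale_density (S : Set (ℕ → Bool)) :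
    IsMartingale fun t => coinMeasure.real (S ∩ cyl t) / coinMeasure.real (cyl t) := by
  refine ⟨fun t => ⟨by positivity, div_le_one_of_le₀ (measureReal_mono Set.inter_subset_right)
    measureReal_nonneg⟩, fun t => ?_⟩
  simp only [coinMeasure_real_cyl, List.length_append, List.length_singleton, pow_succ,
    measureReal_inter_cyl coinMeasure S t]
  ring

/-- The martingale of conditional measures of `S` in basic cylinders. -/
noncomputable def densityMartingale (S : Set (ℕ → Bool)) : Mart :=
  ⟨fun t => coinMeasure.real (S ∩ cyl t) / coinMeasure.real (cyl t), isMartingale_density S⟩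

theorem tendsto_densityMartingale {S : Set (ℕ → Bool)} (hS : IsClopen S) (β : ℕ → Bool) :
    Tendsto (fun l => (densityMartingale S).1 (seg β l)) atTop
      (𝓝 (S.indicator (fun _ => 1) β)) := by
  refine tendsto_const_nhds.congr' ?_
  by_cases hβ : β ∈ S
  · filter_upwards [eventually_cylinder_subset (hS.isOpen.mem_nhds hβ)] with l hl
    have hpos : coinMeasure.real (cyl (seg β l)) ≠ 0 := by simp [coinMeasure_real_cyl]
    rw [← cyl_seg] at hl
    simp [densityMartingale, hβ, Set.inter_eq_right.2 hl, hpos]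
  · filter_upwards [eventually_cylinder_subset (hS.compl.isOpen.mem_nhds hβ)] with l hl
    rw [← cyl_seg] at hl
    simp [densityMartingale, hβ, (Set.disjoint_left.2 fun _ hmem hcyl => hl hcyl hmem).inter_eq]

theorem osc_eq_zero_of_tendsto {f : List Bool → ℝ} {β : ℕ → Bool} {L : ℝ}
    (hf : Tendsto (fun l => f (seg β l)) atTop (𝓝 L)) : osc f β = 0 := by
  have hnonneg (N : ℕ) : 0 ≤ ⨆ p : {n : ℕ // N ≤ n}, ⨆ q : {n : ℕ // N ≤ n},
      |f (seg β p.1) - f (seg β q.1)| :=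
    Real.iSup_nonneg fun p => Real.iSup_nonneg fun q => abs_nonneg _
  refine le_antisymm (le_of_forall_pos_le_add fun ε hε => ?_) (Real.iInf_nonneg hnonneg)
  obtain ⟨N, hN⟩ := Metric.cauchySeq_iff.1 hf.cauchySeq ε hε
  rw [zero_add]
  refine (ciInf_le ⟨0, Set.forall_mem_range.2 hnonneg⟩ N).trans ?_
  exact Real.iSup_le (fun p => Real.iSup_le (fun q => (hN p p.2 q q.2).le) hε.le) hε.le

theorem densityMartingale_mem_Pconv {S : Set (ℕ → Bool)} (hS : IsClopen S) :
    densityMartingale S ∈ Pconv :=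
  fun β => osc_eq_zero_of_tendsto (tendsto_densityMartingale hS β)

theorem psi_densityMartingale {S : Set (ℕ → Bool)} (hS : IsClopen S) (β : ℕ → Bool) :
    psi (densityMartingale S).1 β = S.indicator (fun _ => 1) β :=
  (tendsto_densityMartingale hS β).limUnder_eq

theorem densityMartingale_mem_Ssub_iff {S : ℕ → Set (ℕ → Bool)} (hS : ∀ k, IsClopen (S k)) :
    (fun k => densityMartingale (S k)) ∈ Ssub ↔
      ∃ γ : ℕ → ℕ, ∀ β, ∀ᶠ i in atTop, β ∉ S (γ i) := by
  have hlim (γ : ℕ → ℕ) (β : ℕ → Bool) :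
      Tendsto (fun i => (S (γ i)).indicator (fun _ => (1 : ℝ)) β) atTop (𝓝 0) ↔
        ∀ᶠ i in atTop, β ∉ S (γ i) := by
    simpa using tendsto_indicator_const_apply_iff_eventually (A := ∅) atTop (1 : ℝ) β
      (As := fun i => S (γ i))
  simp only [Ssub, Set.mem_ofPred_eq, densityMartingale_mem_Pconv (hS _), implies_true, true_and,
    psi_densityMartingale (hS _), hlim]

end Martingale

theorem Ssub_sigma12_complete_general {X : Type*} [TopologicalSpace X] [PolishSpace X]
    [TotallySeparatedSpace X] :
    IsSigma12 Ssub ∧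
      ∀ Q : Set X, IsSigma12 Q → ∃ g : X → ℕ → Mart, Continuous g ∧ Q = g ⁻¹' Ssub := by
  refine ⟨isSigma12_Ssub, fun Q hQ => ?_⟩
  obtain ⟨C, hC, hQC⟩ := hQ.exists_isClopen_forall_eventually_notMem
  refine ⟨fun x k => densityMartingale (Prod.mk x ⁻¹' C k), continuous_pi fun k =>
    ((isLocallyConstant_section (hC k)).comp densityMartingale).continuous, ?_⟩
  ext x
  exact (hQC x).trans (densityMartingale_mem_Ssub_iff fun k =>
    (hC k).preimage (Continuous.prodMk_right x)).symm

/-- `𝓢` is `Σ¹₂`-complete: it is the projection of a coanalytic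
set, and every `Σ¹₂` subset of `2^ω` is the preimage of `𝓢` under some
continuous `g : 2^ω → 𝓜^ℕ`. -/
theorem Ssub_sigma12_complete :
    (∃ D : Set ((ℕ → Mart) × (ℕ → ℕ)), IsCoanalytic D ∧ Ssub = Prod.fst '' D) ∧
    ∀ Q : Set (ℕ → Bool),
      (∃ D : Set ((ℕ → Bool) × (ℕ → ℕ)), IsCoanalytic D ∧ Q = Prod.fst '' D) →
      ∃ g : (ℕ → Bool) → (ℕ → Mart), Continuous g ∧ Q = g ⁻¹' Ssub :=
  Ssub_sigma12_complete_general
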